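/- Let A = Σ_{n=1}^∞ Aₙ and B = Σ_{n=1}^∞ Bₙ be strictly convergent sums in the multiplier algebra M(A) of a C*-algebra A, where Aₙ, Bₙ are positive, Aₙ Aₘ = 0 and Bₙ Bₘ = 0 for n ≠ m. If there exists δ > 0 such that Aₙ ≼ (Bₙ − δ)₊ (Cuntz subequivalence in M(A)) for all n, then A ≼ (B − δ')₊ for every 0 < δ' < δ. -/

import Mathlib

open Filter Topology
open scoped MultiplierAlgebra

def CuntzBelow {M : Type*} [CStarAlgebra M] (a b : M) : Prop :=
  ∃ x : ℕ → M, Tendsto (fun n => ‖a - x n * b * star (x n)‖) atTop (𝓝 0)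

noncomputable def cutoff {M : Type*} [CStarAlgebra M] (a : M) (δ : ℝ) : M :=
  cfc (fun t : ℝ => max (t - δ) 0) a

/-- A sequence in the multiplier algebra converges strictly to `L`. -/
def StrictTendsto {A : Type*} [NonUnitalCStarAlgebra A]
    (T : ℕ → 𝓜(ℂ, A)) (L : 𝓜(ℂ, A)) : Prop :=
  ∀ a : A,
    Tendsto (fun n => ‖(T n - L) * (a : 𝓜(ℂ, A))‖) atTop (𝓝 0) ∧
    Tendsto (fun n => ‖(a : 𝓜(ℂ, A)) * (T n - L)‖) atTop (𝓝 0)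

/-!
Write `c = cutoff S δ'`. If every `‖Aₙ - wₙ cₙ wₙ*‖ ≤ ε` with `cₙ = cutoff Bₙ δ'`, then `X = ∑ wₙ`
should satisfy `‖T - X c X*‖ ≤ ε`; the point is to choose `wₙ` so that `X` exists and the errors do
not accumulate. Both follow once `wₙ = Aₙ uₙ Bₙ` with `uₙ` uniformly bounded. For existence,
orthogonality gives `‖∑ Aₙ uₙ Bₙ z‖ ≤ C ‖∑ Bₙ z‖` over finite sets of indices, so the sums of `wₙ`
are strictly Cauchy because those of `Bₙ` are. For the errors, `Aₙ - wₙ cₙ wₙ*` is self-adjoint and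
of the form `Aₙ p`, so distinct errors are orthogonal and the norm of their sum is the largest of
their norms. Finally `Bₙ S = Bₙ²` gives `Bₙ c = Bₙ cₙ`, which makes `X c X*` block diagonal.

For a single pair, take `x` with `a ≈ x (cutoff b δ) x*` and write `cutoff b δ = s s*`. The norm of
`x s` is at most `√(‖a‖ + ε)`, although `x` itself is not controlled. Functional calculus supplies
`r` with `s r b (cutoff b δ') (s r b)* = cutoff b δ`, bounded in terms of `δ` and `δ' < δ`, and `q`
with `a q a (a q)* ≈ a`, bounded in terms of the error; then `u = q x s r`.
-/

section OrthogonalSums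

theorem sum_mul_sum_of_pairwise {ι R : Type*} [NonUnitalNonAssocSemiring R] {a b : ι → R}
    (hab : Pairwise fun i j => a i * b j = 0) (s : Finset ι) :
    (∑ i ∈ s, a i) * ∑ i ∈ s, b i = ∑ i ∈ s, a i * b i := by
  rw [Finset.sum_mul_sum]
  exact Finset.sum_congr rfl fun i hi =>
    Finset.sum_eq_single_of_mem i hi fun j _ hj => hab hj.symm

theorem sum_mul_mul_star_sum {ι R : Type*} [NonUnitalSemiring R] [StarRing R] {w c : ι → R} {f : R}
    (hf : ∀ i, w i * f = w i * c i) (h : Pairwise fun i j => w i * c i * star (w j) = 0)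
    (s : Finset ι) :
    (∑ i ∈ s, w i) * f * star (∑ i ∈ s, w i) = ∑ i ∈ s, w i * c i * star (w i) := by
  rw [Finset.sum_mul, star_sum, Finset.sum_congr rfl fun i _ => hf i, sum_mul_sum_of_pairwise h]

theorem star_mul_mul_mul_eq_zero {R : Type*} [NonUnitalSemiring R] [StarRing R] {a b : R}
    (h : star a * b = 0) (x y : R) : star (a * x) * (b * y) = 0 := by
  rw [star_mul, mul_assoc, ← mul_assoc (star a), h, zero_mul, mul_zero]

theorem norm_le_norm_of_mul_eq_mul_self {R : Type*} [NonUnitalNormedRing R] [StarRing R]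
    [CStarRing R] {a t : R} (ha : IsSelfAdjoint a) (h : a * t = a * a) : ‖a‖ ≤ ‖t‖ := by
  have hle : ‖a‖ * ‖a‖ ≤ ‖a‖ * ‖t‖ := by
    rw [← sq, ← ha.norm_mul_self, ← h]
    exact norm_mul_le a t
  rcases (norm_nonneg a).eq_or_lt with h0 | h0
  · exact h0 ▸ norm_nonneg t
  · exact le_of_mul_le_mul_left hle h0

variable {M : Type*} [NonUnitalCStarAlgebra M]

theorem norm_le_mul_norm_of_star_mul_self_le [PartialOrder M] [StarOrderedRing M] {x y : M}
    {C : ℝ} (hC : 0 ≤ C) (h : star x * x ≤ C ^ 2 • (star y * y)) : ‖x‖ ≤ C * ‖y‖ := by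
  refine le_of_sq_le_sq ?_ (by positivity)
  calc ‖x‖ ^ 2 = ‖star x * x‖ := by rw [sq, CStarRing.norm_star_mul_self]
    _ ≤ ‖C ^ 2 • (star y * y)‖ :=
      CStarAlgebra.norm_le_norm_of_nonneg_of_le (star_mul_self_nonneg x) h
    _ = (C * ‖y‖) ^ 2 := by
      rw [norm_smul, CStarRing.norm_star_mul_self, Real.norm_of_nonneg (sq_nonneg C)]
      ring

theorem star_sum_mul_self_le [PartialOrder M] [StarOrderedRing M] {ι : Type*} {v b : ι → M}
    {C : ℝ} (hv : ∀ i, ‖v i‖ ≤ C)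
    (hvb : Pairwise fun i j => star (v i * b i) * (v j * b j) = 0)
    (hb : Pairwise fun i j => star (b i) * b j = 0) (s : Finset ι) :
    star (∑ i ∈ s, v i * b i) * ∑ i ∈ s, v i * b i ≤
      C ^ 2 • (star (∑ i ∈ s, b i) * ∑ i ∈ s, b i) := by
  rw [star_sum, star_sum, sum_mul_sum_of_pairwise hvb, sum_mul_sum_of_pairwise hb,
    Finset.smul_sum]
  refine Finset.sum_le_sum fun i _ => ?_
  calc star (v i * b i) * (v i * b i) = star (b i) * (star (v i) * v i) * b i := by
        simp only [star_mul, mul_assoc]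
    _ ≤ ‖star (v i) * v i‖ • (star (b i) * b i) :=
      CStarAlgebra.star_left_conjugate_le_norm_smul (.star_mul_self _)
    _ ≤ C ^ 2 • (star (b i) * b i) := by
      refine smul_le_smul_of_nonneg_right ?_ (star_mul_self_nonneg _)
      rw [CStarRing.norm_star_mul_self, ← sq]
      exact pow_le_pow_left₀ (norm_nonneg _) (hv i) 2

theorem norm_sum_mul_mul_le {ι : Type*} {v b : ι → M} {C : ℝ} (hC : 0 ≤ C)
    (hv : ∀ i, ‖v i‖ ≤ C) (hvb : Pairwise fun i j => star (v i * b i) * (v j * b j) = 0)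
    (hb : Pairwise fun i j => star (b i) * b j = 0) (s : Finset ι) (z : M) :
    ‖(∑ i ∈ s, v i * b i) * z‖ ≤ C * ‖(∑ i ∈ s, b i) * z‖ := by
  let _ := CStarAlgebra.spectralOrder M
  have := CStarAlgebra.spectralOrderedRing M
  refine norm_le_mul_norm_of_star_mul_self_le hC ?_
  simpa only [star_mul, mul_assoc, smul_mul_assoc, mul_smul_comm] using
    star_left_conjugate_le_conjugate (star_sum_mul_self_le hv hvb hb s) z

theorem cauchySeq_sum_mul_mul {v b : ℕ → M} {C : ℝ} (hv : ∀ i, ‖v i‖ ≤ C)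
    (hvb : Pairwise fun i j => star (v i * b i) * (v j * b j) = 0)
    (hb : Pairwise fun i j => star (b i) * b j = 0) {z : M}
    (h : CauchySeq fun n => (∑ i ∈ Finset.range n, b i) * z) :
    CauchySeq fun n => (∑ i ∈ Finset.range n, v i * b i) * z := by
  have hC : 0 ≤ C := (norm_nonneg _).trans (hv 0)
  have hdist (m n : ℕ) : dist ((∑ i ∈ Finset.range m, v i * b i) * z)
      ((∑ i ∈ Finset.range n, v i * b i) * z) ≤
        C * dist ((∑ i ∈ Finset.range m, b i) * z) ((∑ i ∈ Finset.range n, b i) * z) := by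
    wlog hmn : n ≤ m generalizing m n
    · simpa only [dist_comm] using this n m (le_of_not_ge hmn)
    rw [dist_eq_norm, dist_eq_norm, ← sub_mul, ← sub_mul, ← Finset.sum_Ico_eq_sub _ hmn,
      ← Finset.sum_Ico_eq_sub _ hmn]
    exact norm_sum_mul_mul_le hC hv hvb hb _ z
  rw [cauchySeq_iff_tendsto_dist_atTop_0] at h ⊢
  exact squeeze_zero (fun _ => dist_nonneg) (fun p => hdist p.1 p.2)
    (by simpa only [mul_zero] using h.const_mul C)

open scoped Function in
theorem norm_sum_le_of_pairwise_mul_eq_zero {ι : Type*} {d : ι → M} {c : ℝ} (hc : 0 ≤ c)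
    (hd : ∀ i, IsSelfAdjoint (d i)) (hdd : Pairwise fun i j => d i * d j = 0)
    (hdc : ∀ i, ‖d i‖ ≤ c) (s : Finset ι) : ‖∑ i ∈ s, d i‖ ≤ c := by
  lift c to NNReal using hc
  have hsup := IsSelfAdjoint.nnnorm_sum_eq_sup s (fun i _ => hd i) hdd
  have hle : ‖∑ i ∈ s, d i‖₊ ≤ c := hsup ▸ Finset.sup_le fun i _ => hdc i
  exact hle

theorem norm_sum_sub_conjugate_sum_le {M ι : Type*} [CStarAlgebra M] {a b u c : ι → M}
    {f : M} {ε : ℝ} (hε : 0 ≤ ε)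
    (ha : ∀ i, IsSelfAdjoint (a i)) (haa : Pairwise fun i j => a i * a j = 0)
    (hb : ∀ i, IsSelfAdjoint (b i)) (hbb : Pairwise fun i j => b i * b j = 0)
    (hc : ∀ i, IsSelfAdjoint (c i)) (hbc : ∀ i, Commute (b i) (c i))
    (hf : ∀ i, b i * f = b i * c i)
    (h : ∀ i, ‖a i - a i * u i * b i * c i * star (a i * u i * b i)‖ ≤ ε) (s : Finset ι) :
    ‖∑ i ∈ s, a i - (∑ i ∈ s, a i * u i * b i) * f * star (∑ i ∈ s, a i * u i * b i)‖ ≤ ε := by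
  let w i := a i * u i * b i
  let d i := a i - w i * c i * star (w i)
  have hwf (i) : w i * f = w i * c i := by simp only [w, mul_assoc, hf]
  have hww : Pairwise fun i j => w i * c i * star (w j) = 0 := fun i j hij =>
    calc w i * c i * star (w j)
        = a i * u i * (b i * c i) * (b j * star (a j * u j)) := by
          simp only [w, star_mul (a j * u j), (hb j).star_eq, ← mul_assoc]
      _ = a i * u i * c i * (b i * b j) * star (a j * u j) := by
          simp only [(hbc i).eq, mul_assoc]
      _ = 0 := by rw [hbb hij, mul_zero, zero_mul]
  have hd (i) : IsSelfAdjoint (d i) := (ha i).sub ((hc i).conjugate (w i))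
  have hd_factor (i) : d i = a i * (1 - u i * b i * c i * star (w i)) := by
    simp only [d, w, mul_sub, mul_one, mul_assoc]
  have hdd : Pairwise fun i j => d i * d j = 0 := fun i j hij => by
    have hzero : star (d i) * d j = 0 := by
      rw [hd_factor, hd_factor]
      exact star_mul_mul_mul_eq_zero ((ha i).star_eq.symm ▸ haa hij) _ _
    rwa [(hd i).star_eq] at hzero
  rw [sum_mul_mul_star_sum hwf hww, ← Finset.sum_sub_distrib]
  exact norm_sum_le_of_pairwise_mul_eq_zero hε hd hdd h s

end OrthogonalSums

section FunctionalCalculus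

variable {M : Type*} [CStarAlgebra M]

/-- The pairs `(c, d)` such that `x` intertwines `c` with `d` and `star c` with `star d`. Being a
closed star subalgebra of the product, it is stable under the continuous functional calculus. -/
def intertwinedPairs (x : M) : StarSubalgebra ℂ (M × M) where
  carrier := {z | SemiconjBy x z.1 z.2 ∧ SemiconjBy x (star z.1) (star z.2)}
  mul_mem' hz hw := ⟨hz.1.mul_right hw.1, by simpa using hw.2.mul_right hz.2⟩
  add_mem' hz hw := ⟨hz.1.add_right hw.1, by simpa using hz.2.add_right hw.2⟩
  algebraMap_mem' r :=
    ⟨(Algebra.commutes r x).symm, by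
      change SemiconjBy x (star (algebraMap ℂ M r)) (star (algebraMap ℂ M r))
      rw [← algebraMap_star_comm]
      exact (Algebra.commutes (star r) x).symm⟩
  star_mem' hz := ⟨hz.2, by simpa using hz.1⟩

theorem isClosed_intertwinedPairs (x : M) : IsClosed (intertwinedPairs x : Set (M × M)) :=
  (isClosed_eq (by fun_prop) (by fun_prop)).inter (isClosed_eq (by fun_prop) (by fun_prop))

theorem cfc_semiconjBy_cfc {x a b : M} (ha : IsStarNormal a) (hb : IsStarNormal b)
    (h : SemiconjBy x a b) {f : ℂ → ℂ} (hf : ContinuousOn f (spectrum ℂ a ∪ spectrum ℂ b)) :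
    SemiconjBy x (cfc f a) (cfc f b) := by
  have hab : IsStarNormal (a, b) := ⟨Prod.ext ha.star_comm_self hb.star_comm_self⟩
  have hmem : (a, b) ∈ intertwinedPairs x := ⟨h, h.star_right ha hb⟩
  have := isClosed_intertwinedPairs x
  have hcfc : cfc f (a, b) ∈ intertwinedPairs x := cfc_mem (𝕜' := ℂ) f hmem
  rw [cfc_map_prod (S := ℂ) f a b hf] at hcfc
  exact hcfc.1

theorem cfc_semiconjBy_cfc_real {x a b : M} (ha : IsSelfAdjoint a) (hb : IsSelfAdjoint b)
    (h : SemiconjBy x a b) {f : ℝ → ℝ} (hf : Continuous f) :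
    SemiconjBy x (cfc f a) (cfc f b) := by
  rw [cfc_real_eq_complex f ha, cfc_real_eq_complex f hb]
  exact cfc_semiconjBy_cfc ha.isStarNormal hb.isStarNormal h (by fun_prop)

theorem isSelfAdjoint_cutoff (b : M) (δ : ℝ) : IsSelfAdjoint (cutoff b δ) :=
  cfc_predicate _ b

theorem commute_cutoff (b : M) (δ : ℝ) : Commute b (cutoff b δ) :=
  ((Commute.refl b).cfc_real _).symm

theorem mul_cutoff_eq_mul_cutoff_of_mul_eq_mul_self {b s : M} (hb : IsSelfAdjoint b)
    (hs : IsSelfAdjoint s) (h : b * s = b * b) (δ : ℝ) : b * cutoff s δ = b * cutoff b δ :=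
  (cfc_semiconjBy_cfc_real hs hb h (by fun_prop)).eq.trans (commute_cutoff b δ).eq.symm

theorem exists_continuous_abs_sub_sq_mul_le {ε : ℝ} (hε : 0 < ε) :
    ∃ q : ℝ → ℝ, Continuous q ∧ (∀ t, |q t| ≤ ε⁻¹) ∧ (∀ t, |t * q t| ≤ 1) ∧
      ∀ t, |t - t * q t * t * (t * q t)| ≤ ε := by
  have hmax (t : ℝ) : 0 < max ε |t| := lt_max_of_lt_left hε
  have habs (t : ℝ) : |t * (max ε |t|)⁻¹| = |t| / max ε |t| := by
    rw [← div_eq_mul_inv, abs_div, abs_of_pos (hmax t)]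
  have hle_one (t : ℝ) : |t * (max ε |t|)⁻¹| ≤ 1 :=
    habs t ▸ div_le_one_of_le₀ (le_max_right _ _) (hmax t).le
  refine ⟨fun t => (max ε |t|)⁻¹, ?_, fun t => ?_, hle_one, fun t => ?_⟩
  · exact (by fun_prop : Continuous _).inv₀ fun t => (hmax t).ne'
  · rw [abs_of_pos (inv_pos.2 (hmax t))]
    exact inv_anti₀ hε (le_max_left _ _)
  · set g := t * (max ε |t|)⁻¹ with hg
    have hsq : g ^ 2 ≤ 1 := (sq_le_one_iff_abs_le_one g).2 (hle_one t)
    have hfactor : t - g * t * g = t * (1 - g ^ 2) := by ring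
    rw [hfactor, abs_mul, abs_of_nonneg (sub_nonneg.2 hsq)]
    rcases le_total ε |t| with ht | ht
    · have hg_one : g ^ 2 = 1 := by
        rw [← sq_abs, hg, habs, max_eq_right ht, div_self (hε.trans_le ht).ne', one_pow]
      simpa [hg_one] using hε.le
    · nlinarith [sq_nonneg g, abs_nonneg t]

theorem exists_norm_sub_conjugate_le {a : M} (ha : IsSelfAdjoint a) {ε : ℝ} (hε : 0 < ε) :
    ∃ q, ‖q‖ ≤ ε⁻¹ ∧ ‖a * q‖ ≤ 1 ∧ ‖a - a * q * a * star (a * q)‖ ≤ ε := by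
  obtain ⟨q, hq, hq_le, hmul_le, herr⟩ := exists_continuous_abs_sub_sq_mul_le hε
  have haq : a * cfc q a = cfc (fun t => t * q t) a := by
    rw [cfc_mul (fun t => t) q a, cfc_id' ℝ a]
  have herr_eq : a - a * cfc q a * a * star (a * cfc q a) =
      cfc (fun t => t - t * q t * t * (t * q t)) a := by
    rw [cfc_sub (fun t => t) _ a, cfc_mul (fun t => t * q t * t) (fun t => t * q t) a,
      cfc_mul (fun t => t * q t) (fun t => t) a, cfc_id' ℝ a, haq,
      (cfc_predicate (fun t => t * q t) a : IsSelfAdjoint _).star_eq]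
  refine ⟨cfc q a, norm_cfc_le (inv_nonneg.2 hε.le) fun t _ => hq_le t, ?_, ?_⟩
  · rw [haq]
    exact norm_cfc_le zero_le_one fun t _ => hmul_le t
  · rw [herr_eq]
    exact norm_cfc_le hε.le fun t _ => herr t

theorem exists_continuous_sq_mul_max_sub_eq_one {δ δ' : ℝ} (hδ : 0 < δ) (hδ' : δ' < δ) :
    ∃ r : ℝ → ℝ, Continuous r ∧ (∀ t, |r t| ≤ (δ * √(δ - δ'))⁻¹) ∧
      ∀ t, δ ≤ t → (r t * t) ^ 2 * max (t - δ') 0 = 1 := by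
  have : 0 < δ - δ' := sub_pos.2 hδ'
  have hden (t : ℝ) : δ * √(δ - δ') ≤ max δ t * √(max δ t - δ') := by
    gcongr <;> exact le_max_left _ _
  have hpos : 0 < δ * √(δ - δ') := by positivity
  refine ⟨fun t => (max δ t * √(max δ t - δ'))⁻¹, ?_, fun t => ?_, fun t ht => ?_⟩
  · exact (by fun_prop : Continuous _).inv₀ fun t => (hpos.trans_le (hden t)).ne'
  · rw [abs_of_nonneg (inv_nonneg.2 (hpos.le.trans (hden t)))]
    exact inv_anti₀ hpos (hden t)
  · have ht0 : t ≠ 0 := (hδ.trans_le ht).ne'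
    have htd : 0 < t - δ' := by linarith
    simp only [max_eq_right ht, max_eq_left htd.le]
    rw [mul_inv, mul_right_comm, inv_mul_cancel₀ ht0, one_mul, inv_pow, Real.sq_sqrt htd.le,
      inv_mul_cancel₀ htd.ne']

theorem exists_cutoff_factorization {b : M} (hb : IsSelfAdjoint b) {δ δ' : ℝ} (hδ : 0 < δ)
    (hδ' : δ' < δ) :
    ∃ s r : M, s * star s = cutoff b δ ∧ ‖r‖ ≤ (δ * √(δ - δ'))⁻¹ ∧
      s * r * b * cutoff b δ' * star (s * r * b) = cutoff b δ := by
  obtain ⟨r, hr, hr_le, hr_eq⟩ := exists_continuous_sq_mul_max_sub_eq_one hδ hδ'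
  let s : ℝ → ℝ := fun t => √(max (t - δ) 0)
  let c : ℝ → ℝ := fun t => max (t - δ') 0
  have : Continuous s := by fun_prop
  have hs_sq (t : ℝ) : s t * s t = max (t - δ) 0 := Real.mul_self_sqrt (le_max_right _ _)
  have hfactor (t : ℝ) : s t * r t * t * c t * (s t * r t * t) = max (t - δ) 0 := by
    have hsplit : s t * r t * t * c t * (s t * r t * t) = s t * s t * ((r t * t) ^ 2 * c t) := by
      ring
    rw [hsplit, hs_sq]
    rcases le_total δ t with ht | ht
    · rw [hr_eq t ht, mul_one]
    · rw [max_eq_right (sub_nonpos.2 ht), zero_mul]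
  have hsrb : cfc s b * cfc r b * b = cfc (fun t => s t * r t * t) b := by
    rw [cfc_mul (fun t => s t * r t) (fun t => t) b, cfc_mul s r b, cfc_id' ℝ b]
  refine ⟨cfc s b, cfc r b, ?_, norm_cfc_le (by positivity) fun t _ => hr_le t, ?_⟩
  · rw [(cfc_predicate s b : IsSelfAdjoint _).star_eq, ← cfc_mul s s b]
    exact cfc_congr fun t _ => hs_sq t
  · have hcut : cutoff b δ' = cfc c b := rfl
    rw [hsrb, (cfc_predicate (fun t => s t * r t * t) b : IsSelfAdjoint _).star_eq, hcut,
      ← cfc_mul _ c b, ← cfc_mul _ _ b]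
    exact cfc_congr fun t _ => hfactor t

theorem cuntzBelow_iff {a b : M} :
    CuntzBelow a b ↔ ∀ ε > 0, ∃ x, ‖a - x * b * star x‖ ≤ ε := by
  constructor
  · rintro ⟨x, hx⟩ ε hε
    obtain ⟨n, hn⟩ := (hx.eventually_le_const hε).exists
    exact ⟨x n, hn⟩
  · intro h
    choose x hx using fun n : ℕ => h (1 / (n + 1)) Nat.one_div_pos_of_nat
    exact ⟨x, squeeze_zero (fun _ => norm_nonneg _) hx tendsto_one_div_add_atTop_nhds_zero_nat⟩

theorem CuntzBelow.isSelfAdjoint {a b : M} (h : CuntzBelow a b) (hb : IsSelfAdjoint b) :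
    IsSelfAdjoint a := by
  obtain ⟨x, hx⟩ := h
  have hlim : Tendsto (fun n => x n * b * star (x n)) atTop (𝓝 a) := by
    rw [tendsto_iff_norm_sub_tendsto_zero]
    simpa only [norm_sub_rev a] using hx
  refine tendsto_nhds_unique ?_ hlim
  simpa only [(hb.conjugate _).star_eq] using hlim.star

theorem norm_sq_le_of_norm_sub_conjugate_le {a b s x : M} {ε : ℝ} (hs : s * star s = b)
    (hx : ‖a - x * b * star x‖ ≤ ε) : ‖x * s‖ ^ 2 ≤ ‖a‖ + ε := by
  have hsq : x * s * star (x * s) = x * b * star x := by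
    rw [star_mul, mul_assoc, ← mul_assoc s, hs, ← mul_assoc]
  rw [sq, ← CStarRing.norm_self_mul_star, hsq]
  exact (norm_le_norm_add_norm_sub' _ a).trans (by rw [norm_sub_rev]; gcongr)

theorem CuntzBelow.exists_norm_le_norm_sub_conjugate_le {a b : M} (ha : IsSelfAdjoint a)
    (hb : IsSelfAdjoint b) {δ δ' ε : ℝ} (hδ : 0 < δ) (hδ' : δ' < δ) (hε : 0 < ε)
    (h : CuntzBelow a (cutoff b δ)) :
    ∃ u, ‖u‖ ≤ ε⁻¹ * √(‖a‖ + ε) * (δ * √(δ - δ'))⁻¹ ∧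
      ‖a - a * u * b * cutoff b δ' * star (a * u * b)‖ ≤ ε + ε := by
  obtain ⟨x, hx⟩ := cuntzBelow_iff.1 h ε hε
  obtain ⟨q, hq, haq, herr⟩ := exists_norm_sub_conjugate_le ha hε
  obtain ⟨s, r, hs, hr, hsr⟩ := exists_cutoff_factorization hb hδ hδ'
  have hxs : ‖x * s‖ ≤ √(‖a‖ + ε) :=
    Real.le_sqrt_of_sq_le (norm_sq_le_of_norm_sub_conjugate_le hs hx)
  refine ⟨q * (x * s) * r, norm_mul₃_le.trans (by gcongr), ?_⟩
  have hconj : a * (q * (x * s) * r) * b * cutoff b δ' * star (a * (q * (x * s) * r) * b) =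
      a * q * (x * cutoff b δ * star x) * star (a * q) := by
    rw [← hsr]
    simp only [star_mul, mul_assoc]
  have hsplit : a - a * q * (x * cutoff b δ * star x) * star (a * q) =
      (a - a * q * a * star (a * q)) +
        a * q * (a - x * cutoff b δ * star x) * star (a * q) := by
    rw [mul_sub, sub_mul]
    abel
  rw [hconj, hsplit]
  refine (norm_add_le _ _).trans (add_le_add herr ?_)
  calc _ ≤ ‖a * q‖ * ‖a - x * cutoff b δ * star x‖ * ‖star (a * q)‖ := norm_mul₃_le
    _ ≤ 1 * ε * 1 := by rw [norm_star]; gcongr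
    _ = ε := by ring

end FunctionalCalculus

section MultiplierAlgebra

section CStarRing

variable {A : Type*} [NonUnitalNormedRing A] [StarRing A] [CStarRing A]

theorem eq_of_forall_mul_left_eq {x y : A} (h : ∀ z, z * x = z * y) : x = y := by
  rw [← sub_eq_zero, ← CStarRing.star_mul_self_eq_zero_iff, mul_sub, h, sub_self]

theorem eq_of_forall_mul_right_eq {x y : A} (h : ∀ z, x * z = y * z) : x = y := by
  rw [← sub_eq_zero, ← CStarRing.mul_star_self_eq_zero_iff, sub_mul, h, sub_self]

variable {𝕜 : Type*} [DenselyNormedField 𝕜] [NormedSpace 𝕜 A] [SMulCommClass 𝕜 A A]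
  [IsScalarTower 𝕜 A A]

theorem norm_coe_multiplier (a : A) : ‖(a : 𝓜(𝕜, A))‖ = ‖a‖ := by
  rw [← DoubleCentralizer.norm_fst, DoubleCentralizer.coe_fst]
  exact ContinuousLinearMap.opNorm_mul_apply 𝕜 A a

theorem mul_coe_multiplier (x : 𝓜(𝕜, A)) (a : A) : x * (a : 𝓜(𝕜, A)) = (x.fst a : A) := by
  refine DoubleCentralizer.ext 𝕜 A _ _ (Prod.ext ?_ ?_)
  · refine ContinuousLinearMap.ext fun y => eq_of_forall_mul_left_eq fun z => ?_
    change z * x.fst (a * y) = z * (x.fst a * y)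
    rw [← x.central, ← mul_assoc, ← mul_assoc, x.central]
  · exact ContinuousLinearMap.ext fun y => x.central y a

theorem coe_mul_multiplier (x : 𝓜(𝕜, A)) (a : A) : (a : 𝓜(𝕜, A)) * x = (x.snd a : A) := by
  refine DoubleCentralizer.ext 𝕜 A _ _ (Prod.ext ?_ ?_)
  · exact ContinuousLinearMap.ext fun y => (x.central a y).symm
  · refine ContinuousLinearMap.ext fun y => eq_of_forall_mul_right_eq fun z => ?_
    change x.snd (y * a) * z = y * x.snd a * z
    rw [x.central, mul_assoc, mul_assoc, x.central]

theorem multiplier_ext {x y : 𝓜(𝕜, A)} (h : ∀ a : A, x * (a : 𝓜(𝕜, A)) = y * a) : x = y := by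
  rw [← sub_eq_zero, ← norm_eq_zero, ← DoubleCentralizer.norm_fst, norm_eq_zero]
  refine ContinuousLinearMap.ext fun a => norm_eq_zero.1 ?_
  rw [← norm_coe_multiplier (𝕜 := 𝕜), ← mul_coe_multiplier, sub_mul, h, sub_self, norm_zero]

theorem isometry_coe_multiplier : Isometry fun a : A => (a : 𝓜(𝕜, A)) := by
  refine Isometry.of_dist_eq fun a b => ?_
  have hsub : (a : 𝓜(𝕜, A)) - b = ((a - b : A) : 𝓜(𝕜, A)) :=
    DoubleCentralizer.ext 𝕜 A _ _ <| Prod.ext (map_sub (ContinuousLinearMap.mul 𝕜 A) a b).symm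
      (map_sub (ContinuousLinearMap.mul 𝕜 A).flip a b).symm
  rw [dist_eq_norm, dist_eq_norm, hsub, norm_coe_multiplier]

theorem cauchySeq_coe_multiplier_iff {a : ℕ → A} :
    CauchySeq (fun n => (a n : 𝓜(𝕜, A))) ↔ CauchySeq a :=
  isometry_coe_multiplier.isUniformInducing.cauchy_map_iff (F := atTop.map a)

variable [StarRing 𝕜] [StarModule 𝕜 A]

theorem star_coe_multiplier (a : A) : star (a : 𝓜(𝕜, A)) = (star a : A) :=
  (map_star (DoubleCentralizer.coeHom (𝕜 := 𝕜) (A := A)) a).symm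

theorem norm_multiplier_le_of_forall_coe_mul_mul_coe {c : ℝ} (hc : 0 ≤ c)
    {x : 𝓜(𝕜, A)} (h : ∀ a b : A, ‖(b : 𝓜(𝕜, A)) * x * a‖ ≤ c * ‖b‖ * ‖a‖) : ‖x‖ ≤ c := by
  rw [← DoubleCentralizer.norm_fst]
  refine ContinuousLinearMap.opNorm_le_bound _ hc fun a => ?_
  have hsq : ‖x.fst a‖ * ‖x.fst a‖ ≤ ‖x.fst a‖ * (c * ‖a‖) := by
    have hstar := h a (star (x.fst a))
    rw [mul_assoc, mul_coe_multiplier, ← star_coe_multiplier, CStarRing.norm_star_mul_self,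
      norm_coe_multiplier, norm_star] at hstar
    linarith
  rcases (norm_nonneg (x.fst a)).eq_or_lt with h0 | h0
  · rw [← h0]
    positivity
  · exact le_of_mul_le_mul_left hsq h0

end CStarRing

variable {A : Type*} [NonUnitalCStarAlgebra A] {P Q : ℕ → 𝓜(ℂ, A)} {x y : 𝓜(ℂ, A)}

theorem strictTendsto_iff :
    StrictTendsto P x ↔ ∀ a : A, Tendsto (fun n => P n * (a : 𝓜(ℂ, A))) atTop (𝓝 (x * a)) ∧
      Tendsto (fun n => (a : 𝓜(ℂ, A)) * P n) atTop (𝓝 (a * x)) := by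
  refine forall_congr' fun a => and_congr ?_ ?_
  · simp only [tendsto_iff_norm_sub_tendsto_zero (b := x * _), sub_mul]
  · simp only [tendsto_iff_norm_sub_tendsto_zero (b := _ * x), mul_sub]

theorem exists_strictTendsto_of_cauchySeq
    (hmul_coe : ∀ a : A, CauchySeq fun n => P n * (a : 𝓜(ℂ, A)))
    (hcoe_mul : ∀ a : A, CauchySeq fun n => (a : 𝓜(ℂ, A)) * P n) :
    ∃ x, StrictTendsto P x := by
  simp only [mul_coe_multiplier, coe_mul_multiplier, cauchySeq_coe_multiplier_iff]
    at hmul_coe hcoe_mul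
  choose f hf using fun a => cauchySeq_tendsto_of_complete (hmul_coe a)
  choose g hg using fun a => cauchySeq_tendsto_of_complete (hcoe_mul a)
  let x : 𝓜(ℂ, A) :=
    { fst := continuousLinearMapOfTendsto (fun n => (P n).fst) (tendsto_pi_nhds.2 hf)
      snd := continuousLinearMapOfTendsto (fun n => (P n).snd) (tendsto_pi_nhds.2 hg)
      central := fun a b => by
        have hlim := (hg a).mul_const b
        simp only [(P _).central] at hlim
        exact tendsto_nhds_unique hlim ((hf b).const_mul a) }
  refine ⟨x, fun a => ⟨?_, ?_⟩⟩
  · simp only [mul_coe_multiplier, norm_coe_multiplier]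
    exact tendsto_iff_norm_sub_tendsto_zero.1 (hf a)
  · simp only [coe_mul_multiplier, norm_coe_multiplier]
    exact tendsto_iff_norm_sub_tendsto_zero.1 (hg a)

theorem strictTendsto_const (x : 𝓜(ℂ, A)) : StrictTendsto (fun _ => x) x :=
  strictTendsto_iff.2 fun _ => ⟨tendsto_const_nhds, tendsto_const_nhds⟩

namespace StrictTendsto

theorem tendsto_mul_coe (h : StrictTendsto P x) (a : A) :
    Tendsto (fun n => P n * (a : 𝓜(ℂ, A))) atTop (𝓝 (x * a)) :=
  (strictTendsto_iff.1 h a).1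

theorem tendsto_coe_mul (h : StrictTendsto P x) (a : A) :
    Tendsto (fun n => (a : 𝓜(ℂ, A)) * P n) atTop (𝓝 (a * x)) :=
  (strictTendsto_iff.1 h a).2

theorem eq_of_eventuallyEq (hP : StrictTendsto P x) (hQ : StrictTendsto Q y)
    (h : P =ᶠ[atTop] Q) : x = y :=
  multiplier_ext fun a => tendsto_nhds_unique (hP.tendsto_mul_coe a) <|
    (hQ.tendsto_mul_coe a).congr' (h.symm.mono fun _ hn => congrArg (· * (a : 𝓜(ℂ, A))) hn)

protected theorem star (h : StrictTendsto P x) : StrictTendsto (fun n => star (P n)) (star x) := by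
  refine strictTendsto_iff.2 fun a => ⟨?_, ?_⟩
  · simpa only [star_mul, star_coe_multiplier, star_star] using (h.tendsto_coe_mul (star a)).star
  · simpa only [star_mul, star_coe_multiplier, star_star] using (h.tendsto_mul_coe (star a)).star

theorem const_mul (h : StrictTendsto P x) (y : 𝓜(ℂ, A)) :
    StrictTendsto (fun n => y * P n) (y * x) := by
  refine strictTendsto_iff.2 fun a => ⟨?_, ?_⟩
  · simpa only [mul_assoc] using (h.tendsto_mul_coe a).const_mul y
  · simpa only [← mul_assoc, coe_mul_multiplier] using h.tendsto_coe_mul (y.snd a)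

theorem isSelfAdjoint (h : StrictTendsto P x) (hP : ∀ n, IsSelfAdjoint (P n)) :
    IsSelfAdjoint x :=
  h.star.eq_of_eventuallyEq h (.of_forall hP)

theorem norm_sub_conjugate_le (hP : StrictTendsto P x) (hQ : StrictTendsto Q y) {f : 𝓜(ℂ, A)}
    {c : ℝ} (h : ∀ n, ‖P n - Q n * f * star (Q n)‖ ≤ c) :
    ‖x - y * f * star y‖ ≤ c := by
  have hc : 0 ≤ c := (norm_nonneg _).trans (h 0)
  refine norm_multiplier_le_of_forall_coe_mul_mul_coe hc fun a b => ?_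
  have hlim : Tendsto (fun n => (b : 𝓜(ℂ, A)) * (P n - Q n * f * star (Q n)) * a) atTop
      (𝓝 (b * (x - y * f * star y) * a)) := by
    simpa only [mul_sub, sub_mul, mul_assoc] using ((hP.tendsto_coe_mul b).mul_const _).sub
      (((hQ.tendsto_coe_mul b).mul_const f).mul (hQ.star.tendsto_mul_coe a))
  refine le_of_tendsto hlim.norm (.of_forall fun n => ?_)
  calc _ ≤ ‖(b : 𝓜(ℂ, A))‖ * ‖P n - Q n * f * star (Q n)‖ * ‖(a : 𝓜(ℂ, A))‖ :=
        norm_mul₃_le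
    _ ≤ ‖b‖ * c * ‖a‖ := by
      rw [norm_coe_multiplier, norm_coe_multiplier]
      gcongr
      exact h n
    _ = c * ‖b‖ * ‖a‖ := by ring

variable {a b : ℕ → 𝓜(ℂ, A)}

theorem mul_eq_mul_self (h : StrictTendsto (fun n => ∑ i ∈ Finset.range n, a i) x)
    (haa : Pairwise fun i j => a i * a j = 0) (n : ℕ) : a n * x = a n * a n := by
  refine (h.const_mul (a n)).eq_of_eventuallyEq (strictTendsto_const _) ?_
  filter_upwards [eventually_gt_atTop n] with N hN
  rw [Finset.mul_sum]
  exact Finset.sum_eq_single_of_mem n (Finset.mem_range.2 hN) fun m _ hm => haa hm.symm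

theorem norm_le_of_pairwise (h : StrictTendsto (fun n => ∑ i ∈ Finset.range n, a i) x)
    (ha : ∀ n, IsSelfAdjoint (a n)) (haa : Pairwise fun i j => a i * a j = 0) (n : ℕ) :
    ‖a n‖ ≤ ‖x‖ :=
  norm_le_norm_of_mul_eq_mul_self (ha n) (h.mul_eq_mul_self haa n)

theorem mul_cutoff_eq_mul_cutoff (h : StrictTendsto (fun n => ∑ i ∈ Finset.range n, a i) x)
    (ha : ∀ n, IsSelfAdjoint (a n)) (haa : Pairwise fun i j => a i * a j = 0) (δ : ℝ) (n : ℕ) :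
    a n * cutoff x δ = a n * cutoff (a n) δ :=
  mul_cutoff_eq_mul_cutoff_of_mul_eq_mul_self (ha n)
    (h.isSelfAdjoint fun _ => isSelfAdjoint_sum _ fun i _ => ha i) (h.mul_eq_mul_self haa n) δ

theorem cauchySeq_sum_mul_mul_coe (hx : StrictTendsto (fun n => ∑ i ∈ Finset.range n, a i) x)
    (hy : StrictTendsto (fun n => ∑ i ∈ Finset.range n, b i) y)
    (ha : ∀ n, IsSelfAdjoint (a n)) (haa : Pairwise fun i j => a i * a j = 0)
    (hb : ∀ n, IsSelfAdjoint (b n)) (hbb : Pairwise fun i j => b i * b j = 0)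
    {u : ℕ → 𝓜(ℂ, A)} {C : ℝ} (hu : ∀ n, ‖u n‖ ≤ C) (z : A) :
    CauchySeq fun n => (∑ i ∈ Finset.range n, a i * u i * b i) * (z : 𝓜(ℂ, A)) := by
  have hau (n) : ‖a n * u n‖ ≤ ‖x‖ * C :=
    (norm_mul_le _ _).trans <|
      mul_le_mul (hx.norm_le_of_pairwise ha haa n) (hu n) (norm_nonneg _) (norm_nonneg _)
  refine cauchySeq_sum_mul_mul hau (fun i j hij => ?_) (fun i j hij => ?_)
    (hy.tendsto_mul_coe z).cauchySeq
  · simpa only [mul_assoc] using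
      star_mul_mul_mul_eq_zero ((ha i).star_eq.symm ▸ haa hij) (u i * b i) (u j * b j)
  · simpa only [(hb i).star_eq] using hbb hij

theorem exists_sum_mul_mul (hx : StrictTendsto (fun n => ∑ i ∈ Finset.range n, a i) x)
    (hy : StrictTendsto (fun n => ∑ i ∈ Finset.range n, b i) y)
    (ha : ∀ n, IsSelfAdjoint (a n)) (haa : Pairwise fun i j => a i * a j = 0)
    (hb : ∀ n, IsSelfAdjoint (b n)) (hbb : Pairwise fun i j => b i * b j = 0)
    {u : ℕ → 𝓜(ℂ, A)} {C : ℝ} (hu : ∀ n, ‖u n‖ ≤ C) :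
    ∃ z, StrictTendsto (fun n => ∑ i ∈ Finset.range n, a i * u i * b i) z := by
  refine exists_strictTendsto_of_cauchySeq
    (hx.cauchySeq_sum_mul_mul_coe hy ha haa hb hbb hu) fun z => ?_
  have hstar : CauchySeq fun n => (∑ i ∈ Finset.range n, b i * star (u i) * a i) *
      ((star z : A) : 𝓜(ℂ, A)) :=
    hy.cauchySeq_sum_mul_mul_coe hx hb hbb ha haa
      (fun n => (norm_star (u n)).trans_le (hu n)) (star z)
  have hcomp := (starₗᵢ ℂ (E := 𝓜(ℂ, A))).isometry.uniformContinuous.comp_cauchySeq hstar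
  simpa [Function.comp_def, mul_assoc, star_coe_multiplier, (ha _).star_eq, (hb _).star_eq]
    using hcomp

end StrictTendsto

end MultiplierAlgebra

theorem stmt_14_general {A : Type*} [NonUnitalCStarAlgebra A] {As Bs : ℕ → 𝓜(ℂ, A)}
    (hB : ∀ n, IsSelfAdjoint (Bs n)) (hAorth : ∀ n m, n ≠ m → As n * As m = 0)
    (hBorth : ∀ n m, n ≠ m → Bs n * Bs m = 0) {T S : 𝓜(ℂ, A)}
    (hT : StrictTendsto (fun n => ∑ i ∈ Finset.range n, As i) T)
    (hS : StrictTendsto (fun n => ∑ i ∈ Finset.range n, Bs i) S)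
    {δ δ' : ℝ} (hδ : 0 < δ) (hδ' : δ' < δ)
    (hcuntz : ∀ n, CuntzBelow (As n) (cutoff (Bs n) δ)) :
    CuntzBelow T (cutoff S δ') := by
  have hA (n) : IsSelfAdjoint (As n) := (hcuntz n).isSelfAdjoint (isSelfAdjoint_cutoff _ _)
  have hAA : Pairwise fun i j => As i * As j = 0 := fun i j => hAorth i j
  have hBB : Pairwise fun i j => Bs i * Bs j = 0 := fun i j => hBorth i j
  refine cuntzBelow_iff.2 fun ε hε => ?_
  choose u hu herr using fun n =>
    (hcuntz n).exists_norm_le_norm_sub_conjugate_le (hA n) (hB n) hδ hδ' (half_pos hε)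
  have hu_le (n) : ‖u n‖ ≤ (ε / 2)⁻¹ * √(‖T‖ + ε / 2) * (δ * √(δ - δ'))⁻¹ := by
    refine (hu n).trans ?_
    gcongr
    exact hT.norm_le_of_pairwise hA hAA n
  obtain ⟨X, hX⟩ := hT.exists_sum_mul_mul hS hA hAA hB hBB hu_le
  refine ⟨X, hT.norm_sub_conjugate_le hX fun n => ?_⟩
  exact norm_sum_sub_conjugate_sum_le hε.le hA hAA hB hBB
    (fun i => isSelfAdjoint_cutoff (Bs i) δ') (fun i => commute_cutoff (Bs i) δ')
    (hS.mul_cutoff_eq_mul_cutoff hB hBB δ') (fun i => (herr i).trans_eq (add_halves ε)) _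

theorem stmt_14 {A : Type*} [NonUnitalCStarAlgebra A]
    [PartialOrder 𝓜(ℂ, A)] [StarOrderedRing 𝓜(ℂ, A)]
    (As Bs : ℕ → 𝓜(ℂ, A)) (hA : ∀ n, 0 ≤ As n) (hB : ∀ n, 0 ≤ Bs n)
    (hAorth : ∀ n m, n ≠ m → As n * As m = 0)
    (hBorth : ∀ n m, n ≠ m → Bs n * Bs m = 0)
    (T S : 𝓜(ℂ, A))
    (hT : StrictTendsto (fun n => ∑ i ∈ Finset.range n, As i) T)
    (hS : StrictTendsto (fun n => ∑ i ∈ Finset.range n, Bs i) S)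
    (δ : ℝ) (hδ : 0 < δ) (hcuntz : ∀ n, CuntzBelow (As n) (cutoff (Bs n) δ))
    (δ' : ℝ) (hδ'₀ : 0 < δ') (hδ' : δ' < δ) :
    CuntzBelow T (cutoff S δ') :=
  stmt_14_general (fun n => .of_nonneg (hB n)) hAorth hBorth hT hS hδ hδ' hcuntz
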